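/- Let X be a compact metric space of finite covering dimension, let n be a positive integer, let r ∈ ℕ, and let k, l ∈ ℕ satisfy k ≤ n and k − l ≥ 4·dim(X) + 4r. Let S = { a ∈ M_n(C(X)) : a is positive and l ≤ rank(a(x)) ≤ k for all x ∈ X } with the supremum-norm topology. Then any two continuous maps from the r-sphere S^r into S are homotopic through maps into S; in particular every continuous map S^r → S is homotopic within S to a constant map, so the homotopy group π_r(S) vanishes. -/

import Mathlib

open scoped ComplexOrder unitInterval

/-- `X` has Lebesgue covering dimension at most `d`: every open cover admits an open
refinement in which every point belongs to at most `d + 1` members. -/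
def HasCovDimLE (X : Type*) [TopologicalSpace X] (d : ℕ) : Prop :=
  ∀ 𝒰 : Set (Set X), (∀ U ∈ 𝒰, IsOpen U) → ⋃₀ 𝒰 = Set.univ →
    ∃ 𝒱 : Set (Set X), (∀ V ∈ 𝒱, IsOpen V) ∧ ⋃₀ 𝒱 = Set.univ ∧
      (∀ V ∈ 𝒱, ∃ U ∈ 𝒰, V ⊆ U) ∧
      ∀ x : X, {V ∈ 𝒱 | x ∈ V}.Finite ∧ {V ∈ 𝒱 | x ∈ V}.ncard ≤ d + 1

/-- `X` has Lebesgue covering dimension exactly `d`: `d` is the least natural number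
such that `HasCovDimLE X d`. -/
def IsCovDim (X : Type*) [TopologicalSpace X] (d : ℕ) : Prop :=
  HasCovDimLE X d ∧ ∀ e : ℕ, HasCovDimLE X e → d ≤ e


section Spectral
open Matrix

/-- squared Frobenius norm -/
noncomputable def frobSq {n : ℕ} (M : Matrix (Fin n) (Fin n) ℂ) : ℝ := ∑ i, ∑ j, ‖M i j‖ ^ 2

lemma frobSq_eq_trace {n : ℕ} (M : Matrix (Fin n) (Fin n) ℂ) :
    ((frobSq M : ℝ) : ℂ) = (Mᴴ * M).trace := by
  simp only [frobSq, Matrix.trace, Matrix.diag, Matrix.mul_apply, Matrix.conjTranspose_apply]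
  push_cast
  rw [Finset.sum_comm]
  refine Finset.sum_congr rfl fun i _ => Finset.sum_congr rfl fun j _ => ?_
  rw [← Complex.conj_mul']; rfl

lemma frobSq_unitary {n : ℕ} (U W : Matrix.unitaryGroup (Fin n) ℂ)
    (M : Matrix (Fin n) (Fin n) ℂ) :
    frobSq ((U : Matrix (Fin n) (Fin n) ℂ) * M * star (W : Matrix (Fin n) (Fin n) ℂ)) = frobSq M := by
  have hU : star (U : Matrix (Fin n) (Fin n) ℂ) * U = 1 := Unitary.coe_star_mul_self U
  have hW : star (W : Matrix (Fin n) (Fin n) ℂ) * W = 1 := Unitary.coe_star_mul_self W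
  have : ((frobSq ((U : Matrix (Fin n) (Fin n) ℂ) * M * star (W : Matrix (Fin n) (Fin n) ℂ)) : ℝ) : ℂ)
      = (frobSq M : ℝ) := by
    rw [frobSq_eq_trace, frobSq_eq_trace]
    simp only [Matrix.star_eq_conjTranspose] at *
    rw [conjTranspose_mul, conjTranspose_mul, conjTranspose_conjTranspose]
    calc _ = ((W : Matrix (Fin n) (Fin n) ℂ) * (Mᴴ * ((U : Matrix (Fin n) (Fin n) ℂ)ᴴ * U) * M
          * (W : Matrix (Fin n) (Fin n) ℂ)ᴴ)).trace := by simp only [Matrix.mul_assoc]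
      _ = _ := by
        rw [hU, Matrix.trace_mul_comm, Matrix.mul_assoc, hW]; simp
  exact_mod_cast this

lemma frobSq_spectral_le {n : ℕ} (U W : Matrix.unitaryGroup (Fin n) ℂ) (D E D' E' : Fin n → ℝ)
    (h : ∀ i j, |D' i - E' j| ≤ |D i - E j|) :
    frobSq ((U : Matrix (Fin n) (Fin n) ℂ) * diagonal (fun i => (D' i : ℂ)) * star (U : Matrix (Fin n) (Fin n) ℂ)
      - (W : Matrix (Fin n) (Fin n) ℂ) * diagonal (fun i => (E' i : ℂ)) * star (W : Matrix (Fin n) (Fin n) ℂ)) ≤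
    frobSq ((U : Matrix (Fin n) (Fin n) ℂ) * diagonal (fun i => (D i : ℂ)) * star (U : Matrix (Fin n) (Fin n) ℂ)
      - (W : Matrix (Fin n) (Fin n) ℂ) * diagonal (fun i => (E i : ℂ)) * star (W : Matrix (Fin n) (Fin n) ℂ)) := by
  have hU : (U : Matrix (Fin n) (Fin n) ℂ) * star (U : Matrix (Fin n) (Fin n) ℂ) = 1 :=
    Unitary.coe_mul_star_self U
  have hW : (W : Matrix (Fin n) (Fin n) ℂ) * star (W : Matrix (Fin n) (Fin n) ℂ) = 1 :=
    Unitary.coe_mul_star_self W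
  have key : ∀ D E : Fin n → ℝ,
    (U : Matrix (Fin n) (Fin n) ℂ) * diagonal (fun i => (D i : ℂ)) * star (U : Matrix (Fin n) (Fin n) ℂ)
      - (W : Matrix (Fin n) (Fin n) ℂ) * diagonal (fun i => (E i : ℂ)) * star (W : Matrix (Fin n) (Fin n) ℂ)
    = (U : Matrix (Fin n) (Fin n) ℂ) * (diagonal (fun i => (D i : ℂ)) *
        (star (U : Matrix (Fin n) (Fin n) ℂ) * W) - (star (U : Matrix (Fin n) (Fin n) ℂ) * W) *
          diagonal (fun i => (E i : ℂ))) * star (W : Matrix (Fin n) (Fin n) ℂ) := by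
    intro D E
    rw [Matrix.mul_sub, Matrix.sub_mul]
    congr 1
    · simp only [Matrix.mul_assoc]
      rw [hW, Matrix.mul_one]
    · simp only [← Matrix.mul_assoc]
      rw [hU, Matrix.one_mul]
  rw [key, key, frobSq_unitary, frobSq_unitary]
  unfold frobSq
  gcongr with i _ j _
  simp only [Matrix.sub_apply, Matrix.diagonal_mul, Matrix.mul_diagonal]
  rw [mul_comm _ (E' j : ℂ), mul_comm _ (E j : ℂ), ← sub_mul, ← sub_mul, norm_mul, norm_mul]
  gcongr
  rw [← Complex.ofReal_sub, ← Complex.ofReal_sub, Complex.norm_real, Complex.norm_real]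
  exact h i j

open Classical in
/-- `(A - c)_+` -/
noncomputable def cutM {n : ℕ} (c : ℝ) (A : Matrix (Fin n) (Fin n) ℂ) : Matrix (Fin n) (Fin n) ℂ :=
  if h : A.IsHermitian then
    (h.eigenvectorUnitary : Matrix (Fin n) (Fin n) ℂ) *
      diagonal (fun i => ((max (h.eigenvalues i - c) 0 : ℝ) : ℂ)) *
      star (h.eigenvectorUnitary : Matrix (Fin n) (Fin n) ℂ)
  else 0

lemma spec_eq {n : ℕ} {A : Matrix (Fin n) (Fin n) ℂ} (h : A.IsHermitian) :
    A = (h.eigenvectorUnitary : Matrix (Fin n) (Fin n) ℂ) *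
      diagonal (fun i => (h.eigenvalues i : ℂ)) *
      star (h.eigenvectorUnitary : Matrix (Fin n) (Fin n) ℂ) := by
  conv_lhs => rw [h.spectral_theorem, Unitary.conjStarAlgAut_apply]
  rfl

lemma cutM_frobSq_le {n : ℕ} (c : ℝ) {A B : Matrix (Fin n) (Fin n) ℂ} (hA : A.IsHermitian)
    (hB : B.IsHermitian) : frobSq (cutM c A - cutM c B) ≤ frobSq (A - B) := by
  conv_rhs => rw [spec_eq hA, spec_eq hB]
  rw [cutM, cutM, dif_pos hA, dif_pos hB]
  apply frobSq_spectral_le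
  intro i j
  refine (abs_max_sub_max_le_abs _ _ _).trans ?_
  simp

lemma conj_diag_posSemidef {n : ℕ} (U : Matrix (Fin n) (Fin n) ℂ) (D : Fin n → ℝ)
    (hD : ∀ i, 0 ≤ D i) : (U * diagonal (fun i => (D i : ℂ)) * star U).PosSemidef := by
  apply Matrix.PosSemidef.mul_mul_conjTranspose_same
  rw [Matrix.posSemidef_diagonal_iff]
  intro i
  exact_mod_cast hD i

lemma cutM_posSemidef {n : ℕ} (c : ℝ) (A : Matrix (Fin n) (Fin n) ℂ) : (cutM c A).PosSemidef := by
  unfold cutM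
  split_ifs with h
  · exact conj_diag_posSemidef _ _ (fun i => le_max_right _ _)
  · exact Matrix.PosSemidef.zero

lemma cutM_frobSq_self {n : ℕ} {c : ℝ} (hc : 0 ≤ c) {A : Matrix (Fin n) (Fin n) ℂ}
    (hA : A.PosSemidef) : frobSq (cutM c A - A) ≤ n * c ^ 2 := by
  have h := hA.1
  conv_lhs => enter [1, 2]; rw [spec_eq h]
  rw [cutM, dif_pos h, ← Matrix.sub_mul, ← Matrix.mul_sub, frobSq_unitary, Matrix.diagonal_sub]
  unfold frobSq
  calc _ ≤ ∑ i : Fin n, c ^ 2 := by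
        gcongr with i
        rw [Finset.sum_eq_single i]
        · rw [Matrix.diagonal_apply_eq, ← Complex.ofReal_sub, Complex.norm_real, Real.norm_eq_abs]
          have := hA.eigenvalues_nonneg i
          gcongr
          rw [abs_le]
          constructor
          · have := le_max_left (h.eigenvalues i - c) 0
            linarith
          · have : max (h.eigenvalues i - c) 0 ≤ h.eigenvalues i + c := by
              apply max_le <;> linarith
            linarith
        · intro j _ hj
          rw [Matrix.diagonal_apply_ne _ hj.symm]; simp
        · simp
    _ = _ := by simp

lemma cutM_inner {n : ℕ} {c : ℝ} {A : Matrix (Fin n) (Fin n) ℂ} (h : A.IsHermitian)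
    (z : Fin n → ℂ) : (c : ℂ) * (star (cutM c A *ᵥ z) ⬝ᵥ (cutM c A *ᵥ z)) ≤
      star (cutM c A *ᵥ z) ⬝ᵥ (A *ᵥ (cutM c A *ᵥ z)) := by
  set U := (h.eigenvectorUnitary : Matrix (Fin n) (Fin n) ℂ) with hUdef
  have hU : star U * U = 1 := Unitary.coe_star_mul_self h.eigenvectorUnitary
  have hU' : U * star U = 1 := Unitary.coe_mul_star_self h.eigenvectorUnitary
  have hC : cutM c A = U * diagonal (fun i => ((max (h.eigenvalues i - c) 0 : ℝ) : ℂ)) * star U := by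
    rw [cutM, dif_pos h]
  have hAc : A - (c : ℂ) • (1 : Matrix (Fin n) (Fin n) ℂ) =
      U * diagonal (fun i => ((h.eigenvalues i - c : ℝ) : ℂ)) * star U := by
    have : diagonal (fun i => ((h.eigenvalues i - c : ℝ) : ℂ)) =
      diagonal (fun i => (h.eigenvalues i : ℂ)) - (c : ℂ) • (1 : Matrix (Fin n) (Fin n) ℂ) := by
      rw [Matrix.smul_one_eq_diagonal, Matrix.diagonal_sub]
      congr 1; ext i; simp
    rw [this, Matrix.mul_sub, Matrix.sub_mul, ← spec_eq h]
    simp [hU']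
  have hP : (cutM c A * (A - (c : ℂ) • (1 : Matrix (Fin n) (Fin n) ℂ)) * cutM c A).PosSemidef := by
    have e : cutM c A * (A - (c : ℂ) • (1 : Matrix (Fin n) (Fin n) ℂ)) * cutM c A =
       U * diagonal (fun i => ((max (h.eigenvalues i - c) 0 * (h.eigenvalues i - c) *
          max (h.eigenvalues i - c) 0 : ℝ) : ℂ)) * star U := by
      rw [hC, hAc]
      set D1 := diagonal (fun i => ((max (h.eigenvalues i - c) 0 : ℝ) : ℂ))
      set D2 := diagonal (fun i => ((h.eigenvalues i - c : ℝ) : ℂ))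
      calc _ = U * (D1 * (star U * U) * D2 * (star U * U) * D1) * star U := by
            simp only [Matrix.mul_assoc]
        _ = _ := by
            rw [hU, Matrix.mul_one, Matrix.mul_one]
            congr 2
            simp only [D1, D2, Matrix.diagonal_mul_diagonal]
            congr 1; ext i; push_cast; rfl
    rw [e]
    apply conj_diag_posSemidef
    intro i
    rcases le_total (h.eigenvalues i - c) 0 with h0 | h0
    · simp [max_eq_right h0]
    · rw [max_eq_left h0]; positivity
  have := hP.dotProduct_mulVec_nonneg z
  have hH : (cutM c A)ᴴ = cutM c A := (cutM_posSemidef c A).1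
  have e2 : star z ⬝ᵥ ((cutM c A * (A - (c : ℂ) • (1 : Matrix (Fin n) (Fin n) ℂ)) * cutM c A) *ᵥ z)
     = star (cutM c A *ᵥ z) ⬝ᵥ (A *ᵥ (cutM c A *ᵥ z)) -
       (c : ℂ) * (star (cutM c A *ᵥ z) ⬝ᵥ (cutM c A *ᵥ z)) := by
    rw [Matrix.star_mulVec, hH, ← Matrix.dotProduct_mulVec, ← Matrix.dotProduct_mulVec,
      ← Matrix.mulVec_mulVec, ← Matrix.mulVec_mulVec, Matrix.sub_mulVec, Matrix.mulVec_sub,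
      dotProduct_sub, Matrix.smul_mulVec, Matrix.one_mulVec, Matrix.mulVec_smul, dotProduct_smul,
      smul_eq_mul]
  rw [e2] at this
  exact sub_nonneg.mp this

end Spectral

section Norms
open Matrix
attribute [local instance] Matrix.normedAddCommGroup Matrix.normedSpace

lemma norm_sq_le_frobSq {n : ℕ} (M : Matrix (Fin n) (Fin n) ℂ) : ‖M‖ ^ 2 ≤ frobSq M := by
  have hnn : 0 ≤ frobSq M := by unfold frobSq; positivity
  have : ‖M‖ ≤ Real.sqrt (frobSq M) := by
    rw [Matrix.norm_le_iff (Real.sqrt_nonneg _)]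
    intro i j
    apply Real.le_sqrt_of_sq_le
    unfold frobSq
    calc ‖M i j‖ ^ 2 ≤ ∑ j, ‖M i j‖ ^ 2 :=
          Finset.single_le_sum (f := fun j => ‖M i j‖ ^ 2) (fun _ _ => by positivity)
            (Finset.mem_univ j)
      _ ≤ _ := Finset.single_le_sum (f := fun i => ∑ j, ‖M i j‖ ^ 2)
            (fun _ _ => by positivity) (Finset.mem_univ i)
  calc ‖M‖ ^ 2 ≤ (Real.sqrt (frobSq M)) ^ 2 := by gcongr
    _ = _ := Real.sq_sqrt hnn

lemma frobSq_le_norm_sq {n : ℕ} (M : Matrix (Fin n) (Fin n) ℂ) :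
    frobSq M ≤ (n * ‖M‖) ^ 2 := by
  unfold frobSq
  calc _ ≤ ∑ i : Fin n, ∑ j : Fin n, ‖M‖ ^ 2 := by
        gcongr with i _ j _
        exact Matrix.norm_entry_le_entrywise_sup_norm M
    _ = _ := by simp; ring

lemma cutM_norm_le {n : ℕ} (c : ℝ) {A B : Matrix (Fin n) (Fin n) ℂ} (hA : A.IsHermitian)
    (hB : B.IsHermitian) : ‖cutM c A - cutM c B‖ ≤ n * ‖A - B‖ := by
  have := (norm_sq_le_frobSq _).trans ((cutM_frobSq_le c hA hB).trans (frobSq_le_norm_sq _))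
  exact le_of_sq_le_sq this (by positivity)

lemma cutM_norm_self {n : ℕ} {c : ℝ} (hc : 0 ≤ c) {A : Matrix (Fin n) (Fin n) ℂ}
    (hA : A.PosSemidef) : ‖cutM c A - A‖ ≤ n * c := by
  have h1 := (norm_sq_le_frobSq _).trans (cutM_frobSq_self hc hA)
  refine le_of_sq_le_sq (h1.trans ?_) (by positivity)
  have : (n : ℝ) ≤ (n : ℝ) ^ 2 := by
    exact_mod_cast Nat.le_self_pow two_ne_zero n
  rw [mul_pow]; gcongr

lemma cutM_inj {n : ℕ} {c : ℝ} {H A : Matrix (Fin n) (Fin n) ℂ} (hH : H.IsHermitian)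
    (hHA : n * ‖H - A‖ < c) (z : Fin n → ℂ) (hz : A *ᵥ (cutM c H *ᵥ z) = 0) :
    cutM c H *ᵥ z = 0 := by
  have h1 := cutM_inner (c := c) hH z
  generalize cutM c H *ᵥ z = u at *
  have e1 : star u ⬝ᵥ (H *ᵥ u) = star u ⬝ᵥ ((H - A) *ᵥ u) := by
    rw [Matrix.sub_mulVec, hz, sub_zero]
  have e2 : star u ⬝ᵥ u = ((∑ i, ‖u i‖ ^ 2 : ℝ) : ℂ) := by
    simp only [dotProduct, Pi.star_apply]
    push_cast
    refine Finset.sum_congr rfl fun i _ => ?_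
    rw [← Complex.conj_mul']; rfl
  rw [e1, e2] at h1
  have h2 : c * (∑ i, ‖u i‖ ^ 2) ≤ ‖star u ⬝ᵥ ((H - A) *ᵥ u)‖ := by
    have := (Complex.le_def.1 h1).1
    rw [← Complex.ofReal_mul, Complex.ofReal_re] at this
    exact this.trans (Complex.re_le_norm _)
  have h3 : ‖star u ⬝ᵥ ((H - A) *ᵥ u)‖ ≤ ‖H - A‖ * (∑ i, ‖u i‖) ^ 2 := by
    simp only [dotProduct, Matrix.mulVec, Pi.star_apply]
    calc _ ≤ ∑ i, ‖u i‖ * (∑ j, ‖H - A‖ * ‖u j‖) := by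
          refine (norm_sum_le _ _).trans ?_
          gcongr with i
          rw [norm_mul, norm_star]
          gcongr
          refine (norm_sum_le _ _).trans ?_
          gcongr with j
          rw [norm_mul]
          gcongr
          exact Matrix.norm_entry_le_entrywise_sup_norm _
      _ = _ := by
          rw [← Finset.sum_mul, ← Finset.mul_sum]; ring
  have h4 : (∑ i, ‖u i‖) ^ 2 ≤ n * ∑ i, ‖u i‖ ^ 2 := by
    have := sq_sum_le_card_mul_sum_sq (s := (Finset.univ : Finset (Fin n))) (f := fun i => ‖u i‖)
    simpa using this
  have hS : 0 ≤ ∑ i, ‖u i‖ ^ 2 := by positivity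
  have h5 : ∑ i, ‖u i‖ ^ 2 = 0 := by
    by_contra hne
    have hpos : 0 < ∑ i, ‖u i‖ ^ 2 := lt_of_le_of_ne hS (Ne.symm hne)
    have : c * (∑ i, ‖u i‖ ^ 2) ≤ (n * ‖H - A‖) * (∑ i, ‖u i‖ ^ 2) := by
      refine h2.trans (h3.trans ?_)
      calc _ ≤ ‖H - A‖ * (n * ∑ i, ‖u i‖ ^ 2) := by gcongr
        _ = _ := by ring
    have := le_of_mul_le_mul_right this hpos
    linarith
  rw [Finset.sum_eq_zero_iff_of_nonneg (fun _ _ => by positivity)] at h5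
  ext i
  have := h5 i (Finset.mem_univ i)
  simpa using this

lemma rank_mul_of_inj {a b e : ℕ} (A : Matrix (Fin a) (Fin b) ℂ) (B : Matrix (Fin b) (Fin e) ℂ)
    (h : ∀ z, A *ᵥ (B *ᵥ z) = 0 → B *ᵥ z = 0) : (A * B).rank = B.rank := by
  have h1 := LinearMap.finrank_range_add_finrank_ker (A * B).mulVecLin
  have h2 := LinearMap.finrank_range_add_finrank_ker B.mulVecLin
  have h3 : LinearMap.ker (A * B).mulVecLin = LinearMap.ker B.mulVecLin := by
    ext z
    simp only [LinearMap.mem_ker, Matrix.mulVecLin_apply, ← Matrix.mulVec_mulVec]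
    exact ⟨h z, fun hz => by rw [hz, Matrix.mulVec_zero]⟩
  rw [h3] at h1
  unfold Matrix.rank
  omega

lemma rank_isOpen (n l : ℕ) : IsOpen {M : Matrix (Fin n) (Fin n) ℂ | l ≤ M.rank} := by
  have hc : Continuous (fun M : Matrix (Fin n) (Fin n) ℂ =>
      LinearMap.toContinuousLinearMap (Matrix.mulVecLin M)) := by
    let L : Matrix (Fin n) (Fin n) ℂ →ₗ[ℂ] ((Fin n → ℂ) →L[ℂ] (Fin n → ℂ)) :=
      { toFun := fun M => LinearMap.toContinuousLinearMap (Matrix.mulVecLin M)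
        map_add' := by intro A B; ext; simp
        map_smul' := by intro A B; ext; simp }
    exact L.continuous_of_finiteDimensional
  have := (isOpen_setOfPred_nat_le_rank (𝕜 := ℂ) (E := Fin n → ℂ) (F := Fin n → ℂ) l).preimage hc
  convert this using 1
  ext M
  simp only [Set.mem_ofPred_eq, Set.mem_preimage, LinearMap.coe_toContinuousLinearMap]
  unfold Matrix.rank LinearMap.rank
  rw [← Module.finrank_eq_rank]
  exact Nat.cast_le.symm

end Norms

section Generic
open Matrix Module
attribute [local instance] Matrix.normedAddCommGroup Matrix.normedSpace

noncomputable def zext {l : ℕ} (j0 : Fin l) (z : {j : Fin l // j ≠ j0} → ℂ) : Fin l → ℂ :=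
  fun j => if h : j = j0 then 1 else z ⟨j, h⟩

noncomputable def wvec {n l : ℕ} (J : Fin l → Fin n) (j0 : Fin l)
    (G : Matrix (Fin n) (Fin n) ℂ) (z : {j : Fin l // j ≠ j0} → ℂ) : Fin n → ℂ :=
  fun a => ∑ j, G a (J j) * zext j0 z j

noncomputable def psi0 {n k l : ℕ} (J : Fin l → Fin n) (j0 : Fin l) (i : Fin n)
    (p : Matrix (Fin n) (Fin n) ℂ × ({j : Fin l // j ≠ j0} → ℂ) ×
      (Fin k → {a : Fin n // a ≠ i} → ℂ)) : Fin k → Fin n → ℂ :=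
  fun κ a => if h : a = i then -(wvec J j0 p.1 p.2.1 i)⁻¹ *
    ∑ a' : {a : Fin n // a ≠ i}, p.2.2 κ a' * wvec J j0 p.1 p.2.1 a' else p.2.2 κ ⟨a, h⟩

lemma psi0_contDiffAt {n k l : ℕ} (J : Fin l → Fin n) (j0 : Fin l) (i : Fin n)
    (p : Matrix (Fin n) (Fin n) ℂ × ({j : Fin l // j ≠ j0} → ℂ) ×
      (Fin k → {a : Fin n // a ≠ i} → ℂ)) (hp : wvec J j0 p.1 p.2.1 i ≠ 0) :
    ContDiffAt ℝ 1 (psi0 (k := k) J j0 i) p := by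
  have hw : ∀ a, ContDiff ℝ 1 (fun p : Matrix (Fin n) (Fin n) ℂ × ({j : Fin l // j ≠ j0} → ℂ) ×
      (Fin k → {a : Fin n // a ≠ i} → ℂ) => wvec J j0 p.1 p.2.1 a) := by
    intro a
    unfold wvec zext
    refine ContDiff.sum fun j _ => ContDiff.mul ?_ ?_
    · exact (contDiff_apply_apply ℝ ℂ (n := 1) a (J j)).comp contDiff_fst
    · by_cases h : j = j0
      · simp only [h, dite_true]; exact contDiff_const
      · simp only [h, dite_false]
        exact (contDiff_apply ℝ ℂ (n := 1) (⟨j, h⟩ : {j : Fin l // j ≠ j0})).comp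
          (contDiff_fst.comp contDiff_snd)
  have hr : ∀ κ (a : {a : Fin n // a ≠ i}),
      ContDiff ℝ 1 (fun p : Matrix (Fin n) (Fin n) ℂ × ({j : Fin l // j ≠ j0} → ℂ) ×
      (Fin k → {a : Fin n // a ≠ i} → ℂ) => p.2.2 κ a) := by
    intro κ a
    exact (contDiff_apply_apply ℝ ℂ (n := 1) κ a).comp (contDiff_snd.comp contDiff_snd)
  rw [contDiffAt_pi]; intro κ
  rw [contDiffAt_pi]; intro a
  unfold psi0
  by_cases h : a = i
  · simp only [h, dite_true]
    refine ContDiffAt.mul (((hw i).contDiffAt.inv hp).neg) ?_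
    exact ContDiffAt.sum fun a' _ => ((hr κ a').mul (hw a')).contDiffAt
  · simp only [h, dite_false]
    exact (hr κ _).contDiffAt

set_option linter.unusedSectionVars false

variable {E : Type*} [NormedAddCommGroup E] [NormedSpace ℝ E] [FiniteDimensional ℝ E]

def badSet {n : ℕ} (k l : ℕ) (Γ : E → Matrix (Fin n) (Fin n) ℂ) : Set (Fin k → Fin n → ℂ) :=
  {q | ∃ e, l ≤ (Γ e).rank ∧ (Matrix.of q * Γ e).rank < l}

lemma badSet_cover {n : ℕ} (k l : ℕ) (Γ : E → Matrix (Fin n) (Fin n) ℂ) :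
    badSet k l Γ ⊆ ⋃ J : Fin l → Fin n, ⋃ j0 : Fin l, ⋃ i : Fin n,
      (fun p : E × ({j : Fin l // j ≠ j0} → ℂ) × (Fin k → {a : Fin n // a ≠ i} → ℂ) =>
        psi0 J j0 i (Γ p.1, p.2.1, p.2.2)) '' {p | wvec J j0 (Γ p.1) p.2.1 i ≠ 0} := by
  rintro q ⟨e, h1, h2⟩
  set G := Γ e with hG
  obtain ⟨f, hf, -, hli⟩ := Submodule.exists_fun_fin_finrank_span_eq ℂ (Set.range G.col)
  rw [Matrix.rank_eq_finrank_span_cols] at h1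
  choose J' hJ' using hf
  set J : Fin l → Fin n := fun j => J' (Fin.castLE h1 j) with hJ
  have hliJ : LinearIndependent ℂ (fun j => G.col (J j)) := by
    have := hli.comp (Fin.castLE h1) (Fin.castLE_injective h1)
    have e : (fun j => G.col (J j)) = f ∘ Fin.castLE h1 := by
      funext j
      simp [J, hJ']
    rw [e]; exact this
  have hdep : ¬ LinearIndependent ℂ (fun j => (Matrix.of q * G).col (J j)) := by
    intro hli2
    have hcard := hli2.fintype_card_le_finrank (R := ℂ) |> fun _ => finrank_span_eq_card hli2
    rw [Matrix.rank_eq_finrank_span_cols] at h2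
    have hle : finrank ℂ (Submodule.span ℂ (Set.range fun j => (Matrix.of q * G).col (J j))) ≤
        finrank ℂ (Submodule.span ℂ (Set.range (Matrix.of q * G).col)) := by
      apply Submodule.finrank_mono
      apply Submodule.span_mono
      rintro _ ⟨j, rfl⟩
      exact ⟨J j, rfl⟩
    rw [hcard, Fintype.card_fin] at hle
    omega
  rw [Fintype.not_linearIndependent_iff] at hdep
  obtain ⟨z, hz, j0, hj0⟩ := hdep
  set y : Fin l → ℂ := fun j => (z j0)⁻¹ * z j with hy
  have hyz : zext j0 (fun j : {j : Fin l // j ≠ j0} => y j) = y := by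
    ext j
    unfold zext
    split_ifs with h
    · rw [h]; simp [hy, hj0]
    · rfl
  set w := wvec J j0 G (fun j : {j : Fin l // j ≠ j0} => y j) with hw
  have hwa : ∀ a, w a = ∑ j, G a (J j) * y j := by
    intro a
    rw [hw]; unfold wvec; rw [hyz]
  have hwne : w ≠ 0 := by
    intro h0
    rw [Fintype.linearIndependent_iff] at hliJ
    have := hliJ y (by
      ext a
      have := congrFun h0 a
      rw [hwa] at this
      simp only [Finset.sum_apply, Pi.smul_apply, Matrix.col_apply, smul_eq_mul]
      rw [← this]
      exact Finset.sum_congr rfl fun j _ => by simp [mul_comm]) j0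
    simp [hy, hj0] at this
  obtain ⟨i, hi⟩ := Function.ne_iff.1 hwne
  have hqw : ∀ κ, ∑ a, q κ a * w a = 0 := by
    intro κ
    have := congrFun hz κ
    simp only [Finset.sum_apply, Pi.smul_apply, Matrix.col_apply, smul_eq_mul,
      Matrix.mul_apply, Matrix.of_apply, Pi.zero_apply] at this
    calc ∑ a, q κ a * w a = (z j0)⁻¹ * ∑ j, z j * ∑ a, q κ a * G a (J j) := by
          simp only [hwa, hy, Finset.mul_sum]
          rw [Finset.sum_comm]
          exact Finset.sum_congr rfl fun j _ => Finset.sum_congr rfl fun a _ => by ring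
      _ = 0 := by rw [this, mul_zero]
  simp only [Set.mem_iUnion]
  refine ⟨J, j0, i, (e, fun j => y j, fun κ a => q κ a), hi, ?_⟩
  ext κ a
  simp only [psi0]
  split_ifs with h
  · have h3 := hqw κ
    rw [← Finset.add_sum_erase _ _ (Finset.mem_univ i)] at h3
    have h4 : ∑ a' : {a : Fin n // a ≠ i}, q κ a' * w a' =
        ∑ a ∈ Finset.univ.erase i, q κ a * w a := by
      rw [← Finset.sum_coe_sort (Finset.univ.erase i)]
      refine Fintype.sum_equiv (Equiv.subtypeEquivRight (by simp)) _ _ (fun a => rfl)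
    rw [← hG, ← hw, h4, h]
    have : w i ≠ 0 := hi
    have h5 : ∑ a ∈ Finset.univ.erase i, q κ a * w a = - (q κ i * w i) := by
      linear_combination h3
    rw [h5]
    field_simp
  · rfl

lemma badSet_dimH {n : ℕ} (k l : ℕ) (Γ : E → Matrix (Fin n) (Fin n) ℂ)
    (hΓ : LocallyLipschitz Γ) (hl : 0 < l) (hn : 0 < n) (hlk : l ≤ k) (hD : finrank ℝ E < 2 * (k - l + 1)) :
    dimH (badSet k l Γ) < (2 * (k * n) : ℕ) := by
  have key : ∀ (J : Fin l → Fin n) (j0 : Fin l) (i : Fin n),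
      dimH ((fun p : E × ({j : Fin l // j ≠ j0} → ℂ) × (Fin k → {a : Fin n // a ≠ i} → ℂ) =>
        psi0 J j0 i (Γ p.1, p.2.1, p.2.2)) '' {p | wvec J j0 (Γ p.1) p.2.1 i ≠ 0}) ≤
      (2 * (k * n) - 1 : ℕ) := by
    intro J j0 i
    refine (dimH_image_le_of_locally_lipschitzOn ?_).trans ?_
    · intro p hp
      obtain ⟨K, t, ht, hK⟩ := (psi0_contDiffAt J j0 i (Γ p.1, p.2.1, p.2.2) hp).exists_lipschitzOnWith
      have hloc : LocallyLipschitz (fun p : E × ({j : Fin l // j ≠ j0} → ℂ) ×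
          (Fin k → {a : Fin n // a ≠ i} → ℂ) => (Γ p.1, p.2.1, p.2.2)) := by
        refine LocallyLipschitz.prodMk (hΓ.comp LipschitzWith.prod_fst.locallyLipschitz) ?_
        exact LipschitzWith.prod_snd.locallyLipschitz
      obtain ⟨K', t', ht', hK'⟩ := hloc p
      refine ⟨K * K', t' ∩ _ ⁻¹' t, mem_nhdsWithin_of_mem_nhds
        (Filter.inter_mem ht' (hloc.continuous.continuousAt.preimage_mem_nhds ht)), ?_⟩
      exact hK.comp (hK'.mono Set.inter_subset_left) (fun x hx => hx.2)
    · refine (dimH_mono (Set.subset_univ _)).trans ?_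
      rw [Real.dimH_univ_eq_finrank]
      norm_cast
      have c1 : Fintype.card {j : Fin l // j ≠ j0} = l - 1 := by
        rw [Fintype.card_subtype_compl]; simp
      have c2 : Fintype.card {j : Fin n // j ≠ i} = n - 1 := by
        rw [Fintype.card_subtype_compl]; simp
      rw [Module.finrank_prod, Module.finrank_prod, Module.finrank_pi_fintype,
        Module.finrank_pi_fintype]
      simp only [Module.finrank_pi_fintype, Complex.finrank_real_complex, Finset.sum_const,
        Finset.card_univ, smul_eq_mul, c1, c2, Fintype.card_fin]
      obtain ⟨n', rfl⟩ : ∃ n', n = n' + 1 := ⟨n - 1, by omega⟩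
      have : k * (n' * 2) = 2 * (k * n') := by ring
      have h2 : k * (n' + 1) = k * n' + k := by ring
      simp only [Nat.add_sub_cancel]
      rw [this, h2]
      omega
  have hpos : 0 < k * n := Nat.mul_pos (by omega) hn
  calc dimH (badSet k l Γ) ≤ _ := dimH_mono (badSet_cover k l Γ)
    _ ≤ (2 * (k * n) - 1 : ℕ) := by
        simp only [dimH_iUnion]
        exact iSup_le fun J => iSup_le fun j0 => iSup_le fun i => key J j0 i
    _ < _ := by norm_cast; omega

lemma exists_generic {ι : Type*} [Finite ι] {n : ℕ} (k l : ℕ)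
    (Γ : ι → E → Matrix (Fin n) (Fin n) ℂ)
    (hΓ : ∀ i, LocallyLipschitz (Γ i)) (hn : 0 < n) (hlk : l ≤ k)
    (hD : finrank ℝ E < 2 * (k - l + 1)) :
    ∃ q : Matrix (Fin k) (Fin n) ℂ, ∀ i e, l ≤ (Γ i e).rank → l ≤ (q * Γ i e).rank := by
  rcases Nat.eq_zero_or_pos l with rfl | hl
  · exact ⟨0, fun _ _ _ => Nat.zero_le _⟩
  have hpos : 0 < k * n := Nat.mul_pos (by omega) hn
  have h1 : dimH (⋃ i, badSet k l (Γ i)) < (finrank ℝ (Fin k → Fin n → ℂ) : ℕ) := by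
    have h2 : finrank ℝ (Fin k → Fin n → ℂ) = 2 * (k * n) := by
      rw [Module.finrank_pi_fintype]
      simp only [Module.finrank_pi_fintype, Complex.finrank_real_complex, Finset.sum_const,
        Finset.card_univ, smul_eq_mul, Fintype.card_fin]
      ring
    rw [dimH_iUnion, h2]
    cases nonempty_fintype ι
    rcases isEmpty_or_nonempty ι with he | he
    · rw [iSup_of_empty, bot_eq_zero]
      exact_mod_cast (by omega : 0 < 2 * (k * n))
    · obtain ⟨i, hi⟩ := exists_eq_ciSup_of_finite (f := fun i => dimH (badSet k l (Γ i)))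
      rw [← hi]
      exact badSet_dimH k l (Γ i) (hΓ i) hl hn hlk hD
  obtain ⟨q, hq⟩ := (dense_compl_of_dimH_lt_finrank h1).nonempty
  refine ⟨Matrix.of q, fun i e he => ?_⟩
  by_contra hlt
  exact hq (Set.mem_iUnion.2 ⟨i, e, he, not_le.1 hlt⟩)

end Generic

section Cover

lemma exists_fine_cover {X : Type*} [MetricSpace X] [CompactSpace X] {d : ℕ}
    (hd : HasCovDimLE X d) {δ : ℝ} (hδ : 0 < δ) :
    ∃ T : Finset (Set X), (∀ V ∈ T, IsOpen V) ∧ (∀ x, ∃ V ∈ T, x ∈ V) ∧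
      (∀ V ∈ T, ∃ c, V ⊆ Metric.ball c δ) ∧
      ∀ x (T' : Finset (Set X)), T' ⊆ T → (∀ V ∈ T', x ∈ V) → T'.card ≤ d + 1 := by
  obtain ⟨𝒱, ho, hc, href, hfin⟩ := hd (Set.range fun c : X => Metric.ball c δ)
    (by rintro _ ⟨c, rfl⟩; exact Metric.isOpen_ball)
    (by
      rw [Set.eq_univ_iff_forall]
      intro x
      exact ⟨_, ⟨x, rfl⟩, Metric.mem_ball_self hδ⟩)
  obtain ⟨t, ht𝒱, htf, htc⟩ := (isCompact_univ (X := X)).elim_finite_subcover_image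
    (b := 𝒱) (c := id) ho (by rw [← hc, Set.sUnion_eq_biUnion]; rfl)
  refine ⟨htf.toFinset, ?_, ?_, ?_, ?_⟩
  · intro V hV
    exact ho V (ht𝒱 (htf.mem_toFinset.1 hV))
  · intro x
    have := htc (Set.mem_univ x)
    simp only [Set.mem_iUnion] at this
    obtain ⟨V, hV, hx⟩ := this
    exact ⟨V, htf.mem_toFinset.2 hV, hx⟩
  · intro V hV
    obtain ⟨_, ⟨c, rfl⟩, h⟩ := href V (ht𝒱 (htf.mem_toFinset.1 hV))
    exact ⟨c, h⟩
  · intro x T' hT' hx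
    rw [← Set.ncard_coe_finset]
    refine (Set.ncard_le_ncard ?_ (hfin x).1).trans (hfin x).2
    intro V hV
    exact ⟨ht𝒱 (htf.mem_toFinset.1 (hT' hV)), hx V hV⟩

lemma exists_fine_partition {X : Type*} [MetricSpace X] [CompactSpace X] {d : ℕ}
    (hd : HasCovDimLE X d) {δ : ℝ} (hδ : 0 < δ) :
    ∃ (N : ℕ) (φ : Fin N → C(X, ℝ)) (c : Fin N → X), (∀ i x, 0 ≤ φ i x) ∧
      (∀ x, ∑ i, φ i x = 1) ∧ (∀ i x, φ i x ≠ 0 → dist x (c i) < δ) ∧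
      ∀ x (T : Finset (Fin N)), (∀ i ∈ T, φ i x ≠ 0) → T.card ≤ d + 1 := by
  obtain ⟨T, ho, hc, hb, hT⟩ := exists_fine_cover hd hδ
  set e := T.equivFin with he
  set U : Fin T.card → Set X := fun i => (e.symm i : Set X) with hU
  obtain ⟨φ, hφ⟩ := PartitionOfUnity.exists_isSubordinate (isClosed_univ (X := X)) U
    (fun i => ho _ (e.symm i).2) (by
      intro x _
      obtain ⟨V, hV, hx⟩ := hc x
      exact Set.mem_iUnion.2 ⟨e ⟨V, hV⟩, by simpa [U] using hx⟩)
  have hsub : ∀ i x, φ i x ≠ 0 → x ∈ U i := fun i x h => hφ i (subset_closure h)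
  choose c hcb using fun i => hb (e.symm i) (e.symm i).2
  refine ⟨T.card, fun i => φ i, c, fun i x => φ.nonneg i x, fun x => ?_, fun i x h => ?_, ?_⟩
  · rw [← finsum_eq_sum_of_fintype]; exact φ.sum_eq_one (Set.mem_univ x)
  · exact hcb i (hsub i x h)
  · intro x S hS
    have hinj : Function.Injective U := fun i j hij => e.symm.injective (Subtype.ext hij)
    rw [← Finset.card_image_of_injective S hinj]
    apply hT x
    · intro V hV
      obtain ⟨i, -, rfl⟩ := Finset.mem_image.1 hV
      exact (e.symm i).2
    · intro V hV
      obtain ⟨i, hi, rfl⟩ := Finset.mem_image.1 hV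
      exact hsub i x (hS i hi)

lemma exists_index {ι V : Type*} [DecidableEq ι] [AddCommMonoid V] (i0 : ι) (d : ℕ) :
    ∀ T : Finset ι, T.card ≤ d →
    ∃ i : Fin d → ι, ∀ F : ι → V, F i0 = 0 → ∑ j ∈ T, F j = ∑ j, F (i j) := by
  induction d with
  | zero =>
    intro T hT
    have : T = ∅ := by simpa using hT
    subst this
    exact ⟨Fin.elim0, fun F _ => by simp⟩
  | succ d ih =>
    intro T hT
    rcases T.eq_empty_or_nonempty with rfl | ⟨b, hb⟩
    · exact ⟨fun _ => i0, fun F hF => by simp [hF]⟩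
    · obtain ⟨i, hi⟩ := ih (T.erase b) (by rw [Finset.card_erase_of_mem hb]; omega)
      refine ⟨Fin.cons b i, fun F hF => ?_⟩
      rw [Fin.sum_univ_succ, ← Finset.add_sum_erase _ _ hb, hi F hF]
      simp

end Cover

section Approx
open Matrix Module
attribute [local instance] Matrix.normedAddCommGroup Matrix.normedSpace

lemma smooth_approx {r n : ℕ} {ε : ℝ} (hε : 0 < ε)
    (A : C(Metric.sphere (0 : EuclideanSpace ℝ (Fin (r + 1))) 1, Matrix (Fin n) (Fin n) ℂ))
    (hA : ∀ s, (A s).IsHermitian) :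
    ∃ B : EuclideanSpace ℝ (Fin (r + 1)) → Matrix (Fin n) (Fin n) ℂ, ContDiff ℝ 1 B ∧
      (∀ s, (B s).IsHermitian) ∧ ∀ s : Metric.sphere (0 : EuclideanSpace ℝ (Fin (r + 1))) 1,
        ‖B s - A s‖ ≤ ε := by
  let A' : C(Metric.sphere (0 : EuclideanSpace ℝ (Fin (r + 1))) 1, Fin n → Fin n → ℂ) := A
  obtain ⟨G, hG⟩ := ContinuousMap.exists_restrict_eq (Metric.isClosed_sphere) A'
  let G' : EuclideanSpace ℝ (Fin (r + 1)) → Matrix (Fin n) (Fin n) ℂ := G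
  have hGc : Continuous G' := G.continuous
  obtain ⟨C, hC, hCd, -⟩ := hGc.exists_contDiff_approx (F := Matrix (Fin n) (Fin n) ℂ)
    1 (ε := fun _ => ε) continuous_const (fun _ => hε)
  have hL : ContDiff ℝ 1 (fun M : Matrix (Fin n) (Fin n) ℂ => (1/2 : ℝ) • (M + Mᴴ)) := by
    refine ContDiff.const_smul _ (contDiff_id.add ?_)
    let L : Matrix (Fin n) (Fin n) ℂ →ₗ[ℝ] Matrix (Fin n) (Fin n) ℂ :=
      { toFun := fun M => Mᴴ
        map_add' := fun A B => Matrix.conjTranspose_add A B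
        map_smul' := fun c A => by simp [Matrix.conjTranspose_smul] }
    exact (LinearMap.toContinuousLinearMap L).contDiff
  refine ⟨fun s => (1/2 : ℝ) • (C s + (C s)ᴴ), hL.comp hC, fun s => ?_, fun s => ?_⟩
  · unfold Matrix.IsHermitian
    rw [Matrix.conjTranspose_smul, Matrix.conjTranspose_add, Matrix.conjTranspose_conjTranspose,
      add_comm]
    simp
  · have h1 : ‖C s - A s‖ ≤ ε := by
      have h2 := (hCd s).le
      have h3 : G' s = A s := congrFun (congrArg DFunLike.coe hG) s
      rw [dist_eq_norm, h3] at h2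
      exact h2
    have h2 : (1/2 : ℝ) • (C s + (C s)ᴴ) - A s = (1/2 : ℝ) • ((C s - A s) + (C s - A s)ᴴ) := by
      rw [Matrix.conjTranspose_sub, (hA s).eq]
      module
    rw [h2, norm_smul]
    calc _ ≤ ‖(1/2 : ℝ)‖ * (‖C s - A s‖ + ‖(C s - A s)ᴴ‖) := by gcongr; exact norm_add_le _ _
      _ ≤ _ := by
        rw [Matrix.norm_conjTranspose]
        norm_num
        linarith

lemma isHermitian_real_smul {n : ℕ} {A : Matrix (Fin n) (Fin n) ℂ} (t : ℝ) (hA : A.IsHermitian) :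
    (t • A).IsHermitian := by
  unfold Matrix.IsHermitian
  rw [Matrix.conjTranspose_smul, hA.eq]; simp

lemma isHermitian_sum {n : ℕ} {ι : Type*} (s : Finset ι) {A : ι → Matrix (Fin n) (Fin n) ℂ}
    (hA : ∀ i, (A i).IsHermitian) : (∑ i ∈ s, A i).IsHermitian := by
  unfold Matrix.IsHermitian
  rw [Matrix.conjTranspose_sum]
  exact Finset.sum_congr rfl fun i _ => (hA i).eq

lemma exists_cut {X : Type*} [MetricSpace X] [CompactSpace X] {d : ℕ}
    (hd : HasCovDimLE X d) {r n l : ℕ}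
    (a : C(Metric.sphere (0 : EuclideanSpace ℝ (Fin (r + 1))) 1 × X, Matrix (Fin n) (Fin n) ℂ))
    (ha : ∀ y, (a y).PosSemidef) (hl : ∀ y, l ≤ (a y).rank) :
    ∃ (N : ℕ) (Γ : Fin N × (Fin d → Fin N) → EuclideanSpace ℝ (Fin (r + 1)) × (Fin d → ℝ) →
        Matrix (Fin n) (Fin n) ℂ)
      (g : Metric.sphere (0 : EuclideanSpace ℝ (Fin (r + 1))) 1 × X → Matrix (Fin n) (Fin n) ℂ),
      (∀ i, LocallyLipschitz (Γ i)) ∧ Continuous g ∧ (∀ y, (g y).PosSemidef) ∧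
      (∀ y, l ≤ (g y).rank) ∧ (∀ y, ∃ i e, g y = Γ i e) ∧
      ∀ y z, a y *ᵥ (g y *ᵥ z) = 0 → g y *ᵥ z = 0 := by
  -- thickening radius
  obtain ⟨η, hη, hηs⟩ := (isCompact_range a.continuous).exists_thickening_subset_open
    (rank_isOpen n l) (by rintro _ ⟨y, rfl⟩; exact hl y)
  set c : ℝ := η / (2 * (n + 1)) with hc
  have hcpos : 0 < c := by positivity
  set ε : ℝ := c / (4 * (n + 1)) with hε
  have hεpos : 0 < ε := by positivity
  have hnε : n * (2 * ε) < c := by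
    have : c = 4 * (n + 1) * ε := by rw [hε]; field_simp
    rw [this]; nlinarith [(Nat.cast_nonneg n : (0:ℝ) ≤ n)]
  have hnc : n * c + c < η := by
    have : η = 2 * (n + 1) * c := by rw [hc]; field_simp
    rw [this]; nlinarith [(Nat.cast_nonneg n : (0:ℝ) ≤ n)]
  -- uniform continuity
  have huc := CompactSpace.uniformContinuous_of_continuous a.continuous
  obtain ⟨δ, hδ, hδa⟩ := Metric.uniformContinuous_iff.1 huc ε hεpos
  obtain ⟨N, φ, p, hφ0, hφ1, hφp, hφc⟩ := exists_fine_partition hd hδ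
  choose B hBs hBh hBa using fun i => smooth_approx hεpos
    (a.comp ⟨fun s => (s, p i), by fun_prop⟩) (fun s => (ha _).1)
  set h : Metric.sphere (0 : EuclideanSpace ℝ (Fin (r + 1))) 1 × X → Matrix (Fin n) (Fin n) ℂ :=
    fun y => ∑ i, φ i y.2 • B i y.1 with hh
  have hhh : ∀ y, (h y).IsHermitian := fun y =>
    isHermitian_sum _ fun i => isHermitian_real_smul _ (hBh i _)
  have hha : ∀ y, ‖h y - a y‖ ≤ 2 * ε := by
    intro y
    have e1 : h y - a y = ∑ i, φ i y.2 • (B i y.1 - a y) := by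
      simp only [hh, smul_sub, Finset.sum_sub_distrib]
      rw [← Finset.sum_smul, hφ1, one_smul]
    rw [e1]
    calc _ ≤ ∑ i, φ i y.2 * (2 * ε) := by
          refine (norm_sum_le _ _).trans ?_
          refine Finset.sum_le_sum fun i _ => ?_
          rw [norm_smul, Real.norm_eq_abs, abs_of_nonneg (hφ0 i _)]
          by_cases h0 : φ i y.2 = 0
          · simp [h0]
          · refine mul_le_mul_of_nonneg_left ?_ (hφ0 i _)
            have h1 := hBa i y.1
            have h2 : dist (a (y.1, p i)) (a y) < ε := by
              apply hδa
              rw [Prod.dist_eq, dist_self, dist_comm]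
              exact max_lt hδ (hφp i _ h0)
            rw [dist_eq_norm] at h2
            calc ‖B i y.1 - a y‖ = ‖(B i y.1 - a (y.1, p i)) + (a (y.1, p i) - a y)‖ := by
                  congr 1; abel
              _ ≤ _ := (norm_add_le _ _).trans (by
                  have h1' : ‖B i y.1 - a (y.1, p i)‖ ≤ ε := h1
                  linarith)
      _ = _ := by rw [← Finset.sum_mul, hφ1, one_mul]
  have hhc : Continuous h := by
    refine continuous_finsetSum _ fun i _ => ?_
    exact ((φ i).continuous.comp continuous_snd).smul
      ((hBs i).continuous.comp (continuous_subtype_val.comp continuous_fst))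
  have hlip : LipschitzOnWith n (cutM (n := n) c) {A | A.IsHermitian} := by
    refine LipschitzOnWith.of_dist_le_mul fun A hA B hB => ?_
    rw [dist_eq_norm, dist_eq_norm]
    exact_mod_cast cutM_norm_le c hA hB
  refine ⟨N, fun i e => cutM c (B i.1 e.1 + ∑ j, e.2 j • (B (i.2 j) e.1 - B i.1 e.1)),
    fun y => cutM c (h y), ?_, ?_, fun y => cutM_posSemidef c _, ?_, ?_, ?_⟩
  · intro i
    have hs : ContDiff ℝ 1 (fun e : EuclideanSpace ℝ (Fin (r + 1)) × (Fin d → ℝ) =>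
        B i.1 e.1 + ∑ j, e.2 j • (B (i.2 j) e.1 - B i.1 e.1)) := by
      have hB : ∀ i, ContDiff ℝ 1 (fun e : EuclideanSpace ℝ (Fin (r + 1)) × (Fin d → ℝ) =>
        B i e.1) := fun i => (hBs i).comp contDiff_fst
      refine (hB _).add (ContDiff.sum fun j _ => ?_)
      have hj : ContDiff ℝ 1 (fun e : EuclideanSpace ℝ (Fin (r + 1)) × (Fin d → ℝ) => e.2 j) :=
        (contDiff_apply ℝ ℝ j).comp contDiff_snd
      exact hj.smul ((hB _).sub (hB _))
    have hll : LocallyLipschitz (fun e : EuclideanSpace ℝ (Fin (r + 1)) × (Fin d → ℝ) =>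
        B i.1 e.1 + ∑ j, e.2 j • (B (i.2 j) e.1 - B i.1 e.1)) := hs.locallyLipschitz
    intro e
    obtain ⟨K, t, ht, hK⟩ := hll e
    refine ⟨n * K, t, ht, hlip.comp hK ?_⟩
    intro e _
    refine (hBh _ _).add (isHermitian_sum _ fun j => isHermitian_real_smul _ ?_)
    exact (hBh _ _).sub (hBh _ _)
  · exact hlip.continuousOn.comp_continuous hhc hhh
  · intro y
    apply hηs
    rw [Metric.mem_thickening_iff]
    refine ⟨a y, ⟨y, rfl⟩, ?_⟩
    rw [dist_eq_norm]
    calc ‖cutM c (h y) - a y‖ = ‖(cutM c (h y) - cutM c (a y)) + (cutM c (a y) - a y)‖ := by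
          congr 1; abel
      _ ≤ n * ‖h y - a y‖ + n * c := (norm_add_le _ _).trans
          (add_le_add (cutM_norm_le c (hhh y) (ha y).1) (cutM_norm_self hcpos.le (ha y)))
      _ ≤ n * (2 * ε) + n * c := by gcongr; exact hha y
      _ < η := by linarith
  · intro y
    classical
    set T : Finset (Fin N) := Finset.univ.filter fun i => φ i y.2 ≠ 0 with hT
    have hTc : T.card ≤ d + 1 := hφc y.2 T (by intro i hi; simpa [hT] using hi)
    have hTne : T.Nonempty := by
      rw [Finset.nonempty_iff_ne_empty]
      intro h0
      have : ∑ i, φ i y.2 = 0 := Finset.sum_eq_zero fun i _ => by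
        by_contra hne
        have : i ∈ T := by simp [hT, hne]
        simp [h0] at this
      rw [hφ1] at this
      exact one_ne_zero this
    obtain ⟨i0, hi0⟩ := hTne
    obtain ⟨i, hi⟩ := exists_index (V := Matrix (Fin n) (Fin n) ℂ) i0 d (T.erase i0)
      (by rw [Finset.card_erase_of_mem hi0]; omega)
    refine ⟨(i0, i), (y.1, fun j => φ (i j) y.2), ?_⟩
    have := hi (fun j => φ j y.2 • (B j y.1 - B i0 y.1)) (by simp)
    simp only
    congr 1
    rw [← this]
    have e1 : h y = B i0 y.1 + ∑ j, φ j y.2 • (B j y.1 - B i0 y.1) := by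
      simp only [hh, smul_sub, Finset.sum_sub_distrib]
      rw [← Finset.sum_smul, hφ1, one_smul]; abel
    rw [e1]
    congr 1
    symm
    apply Finset.sum_subset (Finset.subset_univ _)
    intro j _ hj
    by_cases hj0 : j = i0
    · simp [hj0]
    · have : φ j y.2 = 0 := by
        by_contra hne
        exact hj (by simp [hT, hj0, hne])
      simp [this]
  · intro y z hz
    refine cutM_inj (hhh y) (lt_of_le_of_lt ?_ hnε) z hz
    gcongr
    exact hha y

end Approx

section Homotopies
open Matrix

lemma rank_le_rank_add {n : ℕ} {A B : Matrix (Fin n) (Fin n) ℂ} (hA : A.PosSemidef)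
    (hB : B.PosSemidef) : A.rank ≤ (A + B).rank := by
  have h1 := LinearMap.finrank_range_add_finrank_ker A.mulVecLin
  have h2 := LinearMap.finrank_range_add_finrank_ker (A + B).mulVecLin
  have h3 : LinearMap.ker (A + B).mulVecLin ≤ LinearMap.ker A.mulVecLin := by
    intro z hz
    simp only [LinearMap.mem_ker, Matrix.mulVecLin_apply] at hz ⊢
    have hA0 := hA.dotProduct_mulVec_nonneg z
    have hB0 := hB.dotProduct_mulVec_nonneg z
    have : star z ⬝ᵥ (A *ᵥ z) + star z ⬝ᵥ (B *ᵥ z) = 0 := by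
      rw [← dotProduct_add, ← Matrix.add_mulVec, hz, dotProduct_zero]
    rw [← hA.dotProduct_mulVec_zero_iff]
    exact ((add_eq_zero_iff_of_nonneg hA0 hB0).1 this).1
  have h4 := Submodule.finrank_mono h3
  unfold Matrix.rank
  omega

lemma interp_isUnit {n : ℕ} {A : Matrix (Fin n) (Fin n) ℂ} (hA : A.PosSemidef) {t : ℝ}
    (ht0 : 0 < t) (ht1 : t ≤ 1) : IsUnit ((1 - t) • A + t • (1 : Matrix (Fin n) (Fin n) ℂ)) := by
  have h1 : ((1 - t) • A).PosSemidef := hA.smul (sub_nonneg.2 ht1)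
  have h2 : (t • (1 : Matrix (Fin n) (Fin n) ℂ)).PosDef := Matrix.PosDef.one.smul ht0
  exact (h2.posSemidef_add h1).isUnit

variable {X Y : Type*} [TopologicalSpace X] [TopologicalSpace Y] {n : ℕ}

lemma homotopicWith_of {S : Set C(X, Matrix (Fin n) (Fin n) ℂ)}
    (f g : C(Y, C(X, Matrix (Fin n) (Fin n) ℂ)))
    (F : (I × Y) × X → Matrix (Fin n) (Fin n) ℂ) (hF : Continuous F)
    (h0 : ∀ y x, F ((0, y), x) = f y x) (h1 : ∀ y x, F ((1, y), x) = g y x)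
    (hS : ∀ c : C(X, Matrix (Fin n) (Fin n) ℂ), ∀ t y, (∀ x, c x = F ((t, y), x)) → c ∈ S) :
    ContinuousMap.HomotopicWith f g (fun φ => ∀ y, φ y ∈ S) := by
  let H : ContinuousMap.Homotopy f g :=
    { toContinuousMap := ContinuousMap.curry ⟨F, hF⟩
      map_zero_left := fun y => by ext x : 1; exact h0 y x
      map_one_left := fun y => by ext x : 1; exact h1 y x }
  exact ⟨{ toHomotopy := H
           prop' := fun t y => hS _ t y (fun x => rfl) }⟩

lemma homotopic_const [LocallyCompactSpace X] {k l : ℕ} (f : C(Y, C(X, Matrix (Fin n) (Fin n) ℂ)))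
    (hf : ∀ y x, (f y x).PosSemidef) (hl : ∀ y x, l ≤ (f y x).rank) (hk : ∀ y x, (f y x).rank ≤ k)
    (g : Y × X → Matrix (Fin n) (Fin n) ℂ) (hgc : Continuous g) (hg : ∀ y, (g y).PosSemidef)
    (hinj : ∀ y x z, f y x *ᵥ (g (y, x) *ᵥ z) = 0 → g (y, x) *ᵥ z = 0)
    (q : Matrix (Fin k) (Fin n) ℂ) (hq : ∀ y, l ≤ (q * g y).rank) :
    ContinuousMap.HomotopicWith f (ContinuousMap.const _ (ContinuousMap.const _ (qᴴ * q)))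
      (fun φ => ∀ y, φ y ∈ {c : C(X, Matrix (Fin n) (Fin n) ℂ) |
      (∀ x, (c x).PosSemidef) ∧ ∀ x, l ≤ (c x).rank ∧ (c x).rank ≤ k}) := by
  have hfc : Continuous fun p : Y × X => f p.1 p.2 :=
    ContinuousMap.continuous_uncurry_of_continuous f
  have hqga : ∀ y x, l ≤ (q * g (y, x) * f y x).rank := by
    intro y x
    rw [← Matrix.rank_conjTranspose, Matrix.conjTranspose_mul, (hf y x).1.eq,
      rank_mul_of_inj, Matrix.rank_conjTranspose]
    · exact hq _
    · intro z
      rw [Matrix.conjTranspose_mul, (hg _).1.eq, ← Matrix.mulVec_mulVec]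
      exact hinj y x _
  -- the intermediate map
  have hmid : Continuous fun p : Y × X => (q * g p * f p.1 p.2)ᴴ * (q * g p * f p.1 p.2) := by
    fun_prop
  let m : C(Y, C(X, Matrix (Fin n) (Fin n) ℂ)) := ContinuousMap.curry ⟨_, hmid⟩
  have step1 : ContinuousMap.HomotopicWith f m
      (fun φ => ∀ y, φ y ∈ {c : C(X, Matrix (Fin n) (Fin n) ℂ) |
      (∀ x, (c x).PosSemidef) ∧ ∀ x, l ≤ (c x).rank ∧ (c x).rank ≤ k}) := by
    refine homotopicWith_of f m (fun p => (1 - (p.1.1 : ℝ)) • f p.1.2 p.2 +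
      (p.1.1 : ℝ) • ((q * g (p.1.2, p.2) * f p.1.2 p.2)ᴴ * (q * g (p.1.2, p.2) * f p.1.2 p.2)))
      ?_ ?_ ?_ ?_
    · have h1 : Continuous fun p : (I × Y) × X => f p.1.2 p.2 :=
        hfc.comp (by fun_prop : Continuous fun p : (I × Y) × X => (p.1.2, p.2))
      have h2 : Continuous fun p : (I × Y) × X =>
          (q * g (p.1.2, p.2) * f p.1.2 p.2)ᴴ * (q * g (p.1.2, p.2) * f p.1.2 p.2) :=
        hmid.comp (by fun_prop : Continuous fun p : (I × Y) × X => (p.1.2, p.2))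
      fun_prop
    · intro y x; simp
    · intro y x; simp [m]
    · intro c t y hc
      have ht0 : 0 ≤ (t : ℝ) := t.2.1
      have ht1 : 0 ≤ 1 - (t : ℝ) := sub_nonneg.2 t.2.2
      have hA : ∀ x, ((1 - (t : ℝ)) • f y x).PosSemidef := fun x => (hf y x).smul ht1
      have hB : ∀ x, ((t : ℝ) • ((q * g (y, x) * f y x)ᴴ * (q * g (y, x) * f y x))).PosSemidef :=
        fun x => (Matrix.posSemidef_conjTranspose_mul_self _).smul ht0
      refine ⟨fun x => ?_, fun x => ⟨?_, ?_⟩⟩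
      · rw [hc]
        exact (hA x).add (hB x)
      · rw [hc]
        rcases eq_or_lt_of_le ht1 with h | h
        · have : (t : ℝ) = 1 := by linarith
          simp only [this, sub_self, zero_smul, zero_add, one_smul,
            Matrix.rank_conjTranspose_mul_self]
          exact hqga y x
        · refine le_trans ?_ (rank_le_rank_add (hA x) (hB x))
          have e : f y x = (1 - (t : ℝ))⁻¹ • ((1 - (t : ℝ)) • f y x) := by
            rw [smul_smul, inv_mul_cancel₀ h.ne', one_smul]
          have e2 : (1 - (t : ℝ))⁻¹ • ((1 - (t : ℝ)) • f y x) =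
            ((1 - (t : ℝ))⁻¹ • (1 : Matrix (Fin n) (Fin n) ℂ)) * ((1 - (t : ℝ)) • f y x) := by
            rw [Matrix.smul_mul, Matrix.one_mul]
          calc l ≤ (f y x).rank := hl y x
            _ ≤ _ := by
              conv_lhs => rw [e, e2]
              exact Matrix.rank_mul_le_right _ _
      · rw [hc]
        have e : (1 - (t : ℝ)) • f y x +
            (t : ℝ) • ((q * g (y, x) * f y x)ᴴ * (q * g (y, x) * f y x)) =
            ((1 - (t : ℝ)) • (1 : Matrix (Fin n) (Fin n) ℂ) +
              (t : ℝ) • ((q * g (y, x) * f y x)ᴴ * (q * g (y, x)))) * f y x := by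
          rw [Matrix.add_mul, Matrix.smul_mul, Matrix.smul_mul, Matrix.one_mul]
          simp only [Matrix.mul_assoc]
        exact (congrArg Matrix.rank e).le.trans ((Matrix.rank_mul_le_right _ _).trans (hk y x))
  refine step1.trans ?_
  refine homotopicWith_of m _ (fun p =>
    (q * ((1 - (p.1.1 : ℝ)) • g (p.1.2, p.2) + (p.1.1 : ℝ) • (1 : Matrix (Fin n) (Fin n) ℂ)) *
      ((1 - (p.1.1 : ℝ)) • f p.1.2 p.2 + (p.1.1 : ℝ) • (1 : Matrix (Fin n) (Fin n) ℂ)))ᴴ *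
    (q * ((1 - (p.1.1 : ℝ)) • g (p.1.2, p.2) + (p.1.1 : ℝ) • (1 : Matrix (Fin n) (Fin n) ℂ)) *
      ((1 - (p.1.1 : ℝ)) • f p.1.2 p.2 + (p.1.1 : ℝ) • (1 : Matrix (Fin n) (Fin n) ℂ))))
    ?_ ?_ ?_ ?_
  · have h1 : Continuous fun p : (I × Y) × X => f p.1.2 p.2 :=
      hfc.comp (by fun_prop : Continuous fun p : (I × Y) × X => (p.1.2, p.2))
    have h2 : Continuous fun p : (I × Y) × X => g (p.1.2, p.2) := by fun_prop
    fun_prop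
  · intro y x; simp [m]
  · intro y x; simp
  · intro c t y hc
    refine ⟨fun x => ?_, fun x => ⟨?_, ?_⟩⟩
    · rw [hc]; exact Matrix.posSemidef_conjTranspose_mul_self _
    · rw [hc]
      simp only [Matrix.rank_conjTranspose_mul_self]
      rcases eq_or_lt_of_le (show 0 ≤ (t : ℝ) from t.2.1) with h | h
      · simp only [← h, sub_zero, zero_smul, add_zero, one_smul]
        exact hqga y x
      · rw [Matrix.rank_mul_eq_left_of_isUnit_det, Matrix.rank_mul_eq_left_of_isUnit_det]
        · exact (hq (y, x)).trans (Matrix.rank_mul_le_left _ _)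
        · exact (Matrix.isUnit_iff_isUnit_det _).1 (interp_isUnit (hg _) h t.2.2)
        · exact (Matrix.isUnit_iff_isUnit_det _).1 (interp_isUnit (hf _ _) h t.2.2)
    · rw [hc]
      simp only [Matrix.rank_conjTranspose_mul_self]
      simpa using Matrix.rank_le_card_height (q * ((1 - (t : ℝ)) • g (y, x) +
        (t : ℝ) • (1 : Matrix (Fin n) (Fin n) ℂ)) *
      ((1 - (t : ℝ)) • f y x + (t : ℝ) • (1 : Matrix (Fin n) (Fin n) ℂ)))

end Homotopies

/-- On a compact metric space `X` of finite covering dimension `d`, with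
`k ≤ n` and `k - l ≥ 4d + 4r`, any two continuous maps from the `r`-sphere into the set
`S` of positive elements of `M_n(C(X))` with pointwise rank in `[l, k]` are homotopic
through maps into `S`; in particular `π_r(S)` vanishes. -/
theorem stmt5 {X : Type*} [MetricSpace X] [CompactSpace X] (d : ℕ) (hdim : IsCovDim X d)
    (n l k r : ℕ) (hn : 0 < n) (hkn : k ≤ n) (hlk : l + 4 * d + 4 * r ≤ k)
    (S : Set C(X, Matrix (Fin n) (Fin n) ℂ))
    (hS : S = {c : C(X, Matrix (Fin n) (Fin n) ℂ) |
      (∀ x, (c x).PosSemidef) ∧ ∀ x, l ≤ (c x).rank ∧ (c x).rank ≤ k})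
    (f g : C(Metric.sphere (0 : EuclideanSpace ℝ (Fin (r + 1))) 1,
      C(X, Matrix (Fin n) (Fin n) ℂ)))
    (hf : ∀ s, f s ∈ S) (hg : ∀ s, g s ∈ S) :
    ∃ H : C(I × Metric.sphere (0 : EuclideanSpace ℝ (Fin (r + 1))) 1,
        C(X, Matrix (Fin n) (Fin n) ℂ)),
      (∀ s, H (0, s) = f s) ∧ (∀ s, H (1, s) = g s) ∧ ∀ t s, H (t, s) ∈ S := by
  subst hS
  let f' : C(Metric.sphere (0 : EuclideanSpace ℝ (Fin (r + 1))) 1 × X,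
    Matrix (Fin n) (Fin n) ℂ) :=
    ⟨fun p => f p.1 p.2, ContinuousMap.continuous_uncurry_of_continuous f⟩
  let g' : C(Metric.sphere (0 : EuclideanSpace ℝ (Fin (r + 1))) 1 × X,
    Matrix (Fin n) (Fin n) ℂ) :=
    ⟨fun p => g p.1 p.2, ContinuousMap.continuous_uncurry_of_continuous g⟩
  obtain ⟨N₁, Γ₁, c₁, hΓ₁, hc₁, hp₁, hl₁, hm₁, hi₁⟩ := exists_cut hdim.1 (l := l) f'
    (fun y => (hf y.1).1 y.2) (fun y => ((hf y.1).2 y.2).1)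
  obtain ⟨N₂, Γ₂, c₂, hΓ₂, hc₂, hp₂, hl₂, hm₂, hi₂⟩ := exists_cut hdim.1 (l := l) g'
    (fun y => (hg y.1).1 y.2) (fun y => ((hg y.1).2 y.2).1)
  obtain ⟨q, hq⟩ := exists_generic k l (Sum.elim Γ₁ Γ₂)
    (by rintro (i | i); exacts [hΓ₁ i, hΓ₂ i]) hn (by omega)
    (by
      rw [Module.finrank_prod, finrank_euclideanSpace, Module.finrank_pi]
      simp only [Fintype.card_fin]
      omega)
  have H₁ := homotopic_const (k := k) (l := l) f (fun s x => (hf s).1 x)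
    (fun s x => ((hf s).2 x).1) (fun s x => ((hf s).2 x).2) c₁ hc₁ hp₁
    (fun s x z h => hi₁ (s, x) z h) q (fun y => by
      obtain ⟨i, e, he⟩ := hm₁ y
      rw [he]; exact hq (Sum.inl i) e (by have := hl₁ y; rwa [he] at this))
  have H₂ := homotopic_const (k := k) (l := l) g (fun s x => (hg s).1 x)
    (fun s x => ((hg s).2 x).1) (fun s x => ((hg s).2 x).2) c₂ hc₂ hp₂
    (fun s x z h => hi₂ (s, x) z h) q (fun y => by
      obtain ⟨i, e, he⟩ := hm₂ y
      rw [he]; exact hq (Sum.inr i) e (by have := hl₂ y; rwa [he] at this))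
  obtain ⟨H⟩ := H₁.trans H₂.symm
  exact ⟨H.toContinuousMap, fun s => H.map_zero_left s, fun s => H.map_one_left s,
    fun t s => H.prop' t s⟩
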